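/- arXiv:1410.5339 — 5 statements merged into one kernel-verified Lean document; each statement's English description precedes it below -/
import Mathlib

section
/- Let E be a real Banach space, C a nonempty closed convex subset of E, and T an (α,β,γ,δ)-symmetric generalized hybrid self-mapping of C such that the set F(T) of fixed points of T is nonempty and the conditions α+2β+γ ≥ 0, α+β > 0 and δ ≥ 0 hold. Then T is quasi-nonexpansive, i.e., ‖x − Ty‖ ≤ ‖x − y‖ for all x ∈ F(T) and all y ∈ C. -/
open Filter

/-! At a fixed point `p` the defining inequality collapses to
`(α + β) d(p, Ty)² + (β + γ) d(p, y)² + δ d(y, Ty)² ≤ 0`. The last term is nonnegative and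
`β + γ ≥ -(α + β)`, so `d(p, Ty)² ≤ d(p, y)²`. -/

section FixedPoint

variable {X : Type*} [PseudoMetricSpace X] {α β γ δ : ℝ} {T : X → X} {C : Set X}

/-- `T` is an `(α, β, γ, δ)`-symmetric generalized hybrid mapping on `C`. The notion is stated with
distances, so that it makes sense without a linear structure, and for a globally defined `T`;
that `T` maps `C` into itself is not part of it. -/
def SymmGenHybridOn (α β γ δ : ℝ) (T : X → X) (C : Set X) : Prop :=
  ∀ x ∈ C, ∀ y ∈ C,
    α * dist (T x) (T y) ^ 2 + β * (dist x (T y) ^ 2 + dist (T x) y ^ 2) + γ * dist x y ^ 2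
      + δ * (dist x (T x) ^ 2 + dist y (T y) ^ 2) ≤ 0

/-- `T` is quasi-nonexpansive on `C`: it does not increase the distance from a point of `C` to a
fixed point in `C`. The existence of a fixed point is not part of the notion. -/
def QuasiNonexpansiveOn (T : X → X) (C : Set X) : Prop :=
  ∀ p ∈ C, Function.IsFixedPt T p → ∀ y ∈ C, dist p (T y) ≤ dist p y

theorem SymmGenHybridOn.dist_sq_combination_nonpos_of_isFixedPt (hT : SymmGenHybridOn α β γ δ T C)
    {p y : X} (hp : p ∈ C) (hfix : Function.IsFixedPt T p) (hy : y ∈ C) :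
    (α + β) * dist p (T y) ^ 2 + (β + γ) * dist p y ^ 2 + δ * dist y (T y) ^ 2 ≤ 0 := by
  have h := hT p hp y hy
  rw [hfix.eq, dist_self] at h
  linarith

theorem symm_gen_hybrid_quasiNonexpansive_general (hT : SymmGenHybridOn α β γ δ T C)
    (hsum : 0 ≤ α + 2 * β + γ) (hαβ : 0 < α + β) (hδ : 0 ≤ δ) : QuasiNonexpansiveOn T C := by
  intro p hp hfix y hy
  have hcomb := hT.dist_sq_combination_nonpos_of_isFixedPt hp hfix hy
  have hδ_term : 0 ≤ δ * dist y (T y) ^ 2 := by positivity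
  have hsum_term : 0 ≤ (α + 2 * β + γ) * dist p y ^ 2 := by positivity
  have hmul : (α + β) * dist p (T y) ^ 2 ≤ (α + β) * dist p y ^ 2 := by linarith
  exact (sq_le_sq₀ dist_nonneg dist_nonneg).mp (le_of_mul_le_mul_left hmul hαβ)

end FixedPoint

/-- Let `E` be a real Banach space, `C` a nonempty closed convex subset of `E`,
and `T` an `(α,β,γ,δ)`-symmetric generalized hybrid self-mapping of `C` such that the set of
fixed points of `T` is nonempty and `α+2β+γ ≥ 0`, `α+β > 0`, `δ ≥ 0`. Then `T` is
quasi-nonexpansive: `‖x − Ty‖ ≤ ‖x − y‖` for all fixed points `x ∈ C` of `T` and all `y ∈ C`. -/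
theorem symm_gen_hybrid_quasiNonexpansive
    {E : Type*} [NormedAddCommGroup E] [NormedSpace ℝ E] [CompleteSpace E]
    (C : Set E) (hCne : C.Nonempty) (hCcl : IsClosed C) (hCcv : Convex ℝ C)
    (T : E → E) (hTself : Set.MapsTo T C C)
    (α β γ δ : ℝ)
    (hhyb : ∀ x ∈ C, ∀ y ∈ C,
      α * ‖T x - T y‖ ^ 2 + β * (‖x - T y‖ ^ 2 + ‖T x - y‖ ^ 2) + γ * ‖x - y‖ ^ 2
        + δ * (‖x - T x‖ ^ 2 + ‖y - T y‖ ^ 2) ≤ 0)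
    (hF : ∃ p ∈ C, T p = p)
    (h1 : α + 2 * β + γ ≥ 0) (h2 : α + β > 0) (h3 : δ ≥ 0) :
    ∀ x ∈ C, T x = x → ∀ y ∈ C, ‖x - T y‖ ≤ ‖x - y‖ := by
  have hT : SymmGenHybridOn α β γ δ T C := by simpa only [SymmGenHybridOn, dist_eq_norm] using hhyb
  simpa only [QuasiNonexpansiveOn, Function.IsFixedPt, dist_eq_norm] using
    symm_gen_hybrid_quasiNonexpansive_general hT h1 h2 h3
end

section
/- Let E be a real Banach space and C a nonempty subset of E. Every firmly nonexpansive self-mapping T of C is nonspreading: 2‖Tx − Ty‖² ≤ ‖x − Ty‖² + ‖y − Tx‖² for all x, y ∈ C. -/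
/-!
Add the duality bounds `‖Tx - Ty‖² = j (Tx - Ty)` and `‖Tx - Ty‖² ≤ j (x - y)`, and regroup the
arguments of `j` across the two pairs as `(x - Ty) + (Tx - y)`. Young's inequality on each summand
costs `‖j‖² = ‖Tx - Ty‖²` in total, which leaves the nonspreading inequality.
-/

/-- The normalized duality mapping `J : E → 2^{E*}`, as a set-valued map into the strong dual. -/
def normalizedDuality {E : Type*} [SeminormedAddCommGroup E] [NormedSpace ℝ E] (x : E) :
    Set (StrongDual ℝ E) :=
  {j | j x = ‖x‖ ^ 2 ∧ ‖j‖ ^ 2 = ‖x‖ ^ 2}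

/-- Firmly nonexpansive maps on `C`, in the sense of the normalized duality mapping. The map is
encoded as a total function on `E`, of which only the values on `C` matter. -/
def IsFirmlyNonexpansiveOn {E : Type*} [SeminormedAddCommGroup E] [NormedSpace ℝ E]
    (T : E → E) (C : Set E) : Prop :=
  ∀ x ∈ C, ∀ y ∈ C, ∃ j ∈ normalizedDuality (T x - T y), ‖T x - T y‖ ^ 2 ≤ j (x - y)

/-- Nonspreading maps on `C`, the conclusion sought for firmly nonexpansive maps; the encoding of
the map is that of `IsFirmlyNonexpansiveOn`. -/
def IsNonspreadingOn {E : Type*} [SeminormedAddCommGroup E] (T : E → E) (C : Set E) : Prop :=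
  ∀ x ∈ C, ∀ y ∈ C, 2 * ‖T x - T y‖ ^ 2 ≤ ‖x - T y‖ ^ 2 + ‖y - T x‖ ^ 2

theorem two_mul_norm_apply_le_opNorm_sq_add_norm_sq {𝕜 𝕜₂ E F : Type*}
    [NontriviallyNormedField 𝕜] [NontriviallyNormedField 𝕜₂]
    [SeminormedAddCommGroup E] [SeminormedAddCommGroup F] [NormedSpace 𝕜 E] [NormedSpace 𝕜₂ F]
    {σ : 𝕜 →+* 𝕜₂} [RingHomIsometric σ] (f : E →SL[σ] F) (x : E) :
    2 * ‖f x‖ ≤ ‖f‖ ^ 2 + ‖x‖ ^ 2 :=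
  calc
    2 * ‖f x‖ ≤ 2 * (‖f‖ * ‖x‖) := by gcongr; exact f.le_opNorm x
    _ = 2 * ‖f‖ * ‖x‖ := (mul_assoc _ _ _).symm
    _ ≤ ‖f‖ ^ 2 + ‖x‖ ^ 2 := two_mul_le_add_sq _ _

section Duality

variable {E : Type*} [SeminormedAddCommGroup E] [NormedSpace ℝ E]

theorem two_mul_apply_sub_add_apply_sub_le (j : StrongDual ℝ E) (x y u v : E) :
    2 * (j (x - y) + j (u - v)) ≤ 2 * ‖j‖ ^ 2 + ‖x - v‖ ^ 2 + ‖y - u‖ ^ 2 := by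
  have young (z : E) : 2 * j z ≤ ‖j‖ ^ 2 + ‖z‖ ^ 2 :=
    (mul_le_mul_of_nonneg_left (Real.le_norm_self _) zero_le_two).trans
      (two_mul_norm_apply_le_opNorm_sq_add_norm_sq j z)
  calc
    2 * (j (x - y) + j (u - v)) = 2 * j (x - v) + 2 * j (u - y) := by
      simp only [map_sub]; ring
    _ ≤ (‖j‖ ^ 2 + ‖x - v‖ ^ 2) + (‖j‖ ^ 2 + ‖u - y‖ ^ 2) := add_le_add (young _) (young _)
    _ = 2 * ‖j‖ ^ 2 + ‖x - v‖ ^ 2 + ‖y - u‖ ^ 2 := by rw [norm_sub_rev u y]; ring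

theorem firmlyNonexpansive_nonspreading_general {T : E → E} {C : Set E}
    (hT : IsFirmlyNonexpansiveOn T C) : IsNonspreadingOn T C := by
  intro x hx y hy
  obtain ⟨j, ⟨apply_eq, norm_eq⟩, firm⟩ := hT x hx y hy
  have four_point := two_mul_apply_sub_add_apply_sub_le j x y (T x) (T y)
  rw [apply_eq, norm_eq] at four_point
  linarith

end Duality

/-- Let `E` be a real Banach space and `C` a nonempty subset of `E`. Every
firmly nonexpansive self-mapping `T` of `C` is nonspreading:
`2‖Tx − Ty‖² ≤ ‖x − Ty‖² + ‖y − Tx‖²` for all `x, y ∈ C`. Firm nonexpansiveness: for all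
`x, y ∈ C` there is `j` in the normalized duality mapping evaluated at `Tx − Ty`
(i.e. `j(Tx−Ty) = ‖Tx−Ty‖² = ‖j‖²`) with `‖Tx−Ty‖² ≤ j(x−y)`. -/
theorem firmlyNonexpansive_nonspreading
    {E : Type*} [NormedAddCommGroup E] [NormedSpace ℝ E] [CompleteSpace E]
    (C : Set E) (hCne : C.Nonempty)
    (T : E → E) (hTself : Set.MapsTo T C C)
    (hfirm : ∀ x ∈ C, ∀ y ∈ C, ∃ j : E →L[ℝ] ℝ,
      j (T x - T y) = ‖T x - T y‖ ^ 2 ∧ ‖j‖ ^ 2 = ‖T x - T y‖ ^ 2 ∧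
      ‖T x - T y‖ ^ 2 ≤ j (x - y)) :
    ∀ x ∈ C, ∀ y ∈ C, 2 * ‖T x - T y‖ ^ 2 ≤ ‖x - T y‖ ^ 2 + ‖y - T x‖ ^ 2 :=
  firmlyNonexpansive_nonspreading_general fun x hx y hy ↦
    let ⟨j, apply_eq, norm_eq, firm⟩ := hfirm x hx y hy
    ⟨j, ⟨apply_eq, norm_eq⟩, firm⟩
end

section
/- Let E be a uniformly convex real Banach space, C a nonempty closed convex subset of E, and T an (α,β,γ,δ)-symmetric generalized hybrid self-mapping of C satisfying α+2β+γ ≥ 0, α+β > 0 and δ ≥ 0. If there exists x ∈ C such that the orbit {Tⁿx : n ∈ ℕ} is bounded, then T has a fixed point in C. -/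
/-!
A Banach limit `μ` (an ultrafilter limit of Cesàro averages) turns the bounded orbit `x n = Tⁿ x₀`
into the function `g y = μ (n ↦ ‖x n - y‖²)` on `E`. Uniform convexity of `E` makes `g` uniformly
convex on its sublevel sets, so `g` has a strict minimizer `p` over `C`. Apply `μ` to the hybrid
inequality for the pairs `(x n, p)`: by shift invariance `‖T (x n) - y‖² = ‖x (n + 1) - y‖²` and
`‖x n - y‖²` have the same limit `g y`, which leaves `(α + β) g (T p) + (β + γ) g p ≤ 0`. Hence
`g (T p) ≤ g p`, and strictness of the minimum forces `T p = p`.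
-/

open Filter Topology
open scoped BoundedContinuousFunction

section UniformConvexity

variable {E : Type*} [SeminormedAddCommGroup E] [NormedSpace ℝ E] [UniformConvexSpace E]

lemma exists_forall_norm_add_le_two_mul_max_sub (r : ℝ) {ε : ℝ} (hε : 0 < ε) :
    ∃ δ > 0, ∀ a b : E, ‖a‖ ≤ r → ‖b‖ ≤ r → ε ≤ ‖a - b‖ →
      ‖a + b‖ ≤ 2 * max ‖a‖ ‖b‖ - δ := by
  rcases le_or_gt r 0 with hr | hr
  · exact ⟨1, one_pos, fun a b ha hb hab => by linarith [norm_sub_le a b]⟩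
  obtain ⟨t, ht, hconv⟩ := exists_forall_closed_ball_dist_add_le_two_sub E (div_pos hε hr)
  refine ⟨t * (ε / 2), by positivity, fun a b ha hb hab => ?_⟩
  set m := max ‖a‖ ‖b‖
  have ha_le : ‖a‖ ≤ m := le_max_left _ _
  have hb_le : ‖b‖ ≤ m := le_max_right _ _
  have hεm : ε / 2 ≤ m := by linarith [norm_sub_le a b]
  have hm : 0 < m := by linarith
  have norm_rescale (v : E) : ‖m⁻¹ • v‖ = ‖v‖ / m := by
    rw [norm_smul_of_nonneg (inv_nonneg.2 hm.le), inv_mul_eq_div]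
  have hsep : ε / r ≤ ‖m⁻¹ • a - m⁻¹ • b‖ := by
    rw [← smul_sub, norm_rescale]
    exact div_le_div₀ (norm_nonneg _) hab hm (max_le ha hb)
  have hscaled : ‖m⁻¹ • a + m⁻¹ • b‖ ≤ 2 - t :=
    hconv (by rwa [norm_rescale, div_le_one hm]) (by rwa [norm_rescale, div_le_one hm]) hsep
  rw [← smul_add, norm_rescale, div_le_iff₀ hm] at hscaled
  linarith [mul_le_mul_of_nonneg_left hεm ht.le]

lemma exists_forall_norm_midpoint_sq_le_sub (r : ℝ) {ε : ℝ} (hε : 0 < ε) :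
    ∃ d > 0, ∀ a b : E, ‖a‖ ≤ r → ‖b‖ ≤ r → ε ≤ ‖a - b‖ →
      ‖midpoint ℝ a b‖ ^ 2 ≤ (‖a‖ ^ 2 + ‖b‖ ^ 2) / 2 - d := by
  obtain ⟨δ, hδ, hconv⟩ := exists_forall_norm_add_le_two_mul_max_sub (E := E) r hε
  refine ⟨δ ^ 2 / 8, by positivity, fun a b ha hb hab => ?_⟩
  -- The defect in the triangle inequality and the gap `D` between the norms cannot both be small,
  -- and `2 (‖a‖² + ‖b‖²) - ‖a + b‖²` dominates the sum of their squares.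
  set D := |‖a‖ - ‖b‖|
  have hdefect : δ ≤ (‖a‖ + ‖b‖ - ‖a + b‖) + D := by
    have hmax : 2 * max ‖a‖ ‖b‖ = ‖a‖ + ‖b‖ + D := by
      simpa [abs_sub_comm] using two_nsmul_sup_eq_add_add_abs_sub ‖a‖ ‖b‖
    linarith [hconv a b ha hb hab]
  have htriangle : (‖a‖ + ‖b‖ - ‖a + b‖) ^ 2 ≤ (‖a‖ + ‖b‖) ^ 2 - ‖a + b‖ ^ 2 := by
    nlinarith [norm_add_le a b, norm_nonneg (a + b)]
  have hsum : δ ^ 2 ≤ 2 * ((‖a‖ + ‖b‖ - ‖a + b‖) ^ 2 + D ^ 2) :=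
    (pow_le_pow_left₀ hδ.le hdefect 2).trans add_sq_le
  have hD : D ^ 2 = (‖a‖ - ‖b‖) ^ 2 := sq_abs _
  have hmid : ‖midpoint ℝ a b‖ = ‖a + b‖ / 2 := by
    rw [midpoint_eq_smul_add, norm_smul, invOf_eq_inv, norm_inv, Real.norm_ofNat, inv_mul_eq_div]
  rw [hmid]
  linarith

end UniformConvexity

section StrictMinimizer

lemma exists_strict_minimizer_of_dist_lt {X : Type*} [MetricSpace X] {s : Set X}
    (hs : IsComplete s) (hne : s.Nonempty) {g : X → ℝ} (hg : LowerSemicontinuousOn g s)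
    (hbdd : BddBelow (g '' s))
    (hclose : ∀ ε > 0, ∃ d > 0, ∀ y ∈ s, ∀ z ∈ s,
      g y < sInf (g '' s) + d → g z < sInf (g '' s) + d → dist y z < ε) :
    ∃ p ∈ s, ∀ q ∈ s, q ≠ p → g p < g q := by
  set I := sInf (g '' s)
  let F : Filter X := comap g (𝓝 I) ⊓ 𝓟 s
  have hFs : F ≤ 𝓟 s := inf_le_right
  have hFI : Tendsto g F (𝓝 I) := tendsto_comap.mono_left inf_le_left
  have hF : F.NeBot :=
    frequently_mem_iff_neBot.1 <| frequently_comap.2 <|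
      (mem_closure_iff_frequently.1 (csInf_mem_closure (hne.image g) hbdd)).mono
        fun _ ⟨y, hy, hgy⟩ => ⟨y, hgy, hy⟩
  have hcauchy : Cauchy F := by
    refine Metric.cauchy_iff.2 ⟨hF, fun ε hε => ?_⟩
    obtain ⟨d, hd, hdist⟩ := hclose ε hε
    have hnear : {y | g y < I + d} ∈ F := hFI.eventually_lt_const (lt_add_of_pos_right I hd)
    exact ⟨_, inter_mem hnear (le_principal_iff.1 hFs),
      fun y hy z hz => hdist y hy.2 z hz.2 hy.1 hz.1⟩
  obtain ⟨p, hp, hFp⟩ := hs F hcauchy hFs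
  have hgp : g p ≤ I := le_of_forall_lt_imp_le_of_dense fun c hc =>
    ge_of_tendsto hFI <| ((hg p hp c hc).filter_mono (le_inf hFp hFs)).mono fun _ => le_of_lt
  refine ⟨p, hp, fun q hq hqp => ?_⟩
  by_contra! hle
  obtain ⟨d, hd, hdist⟩ := hclose (dist q p) (dist_pos.2 hqp)
  exact lt_irrefl _ (hdist q hq p hp (by linarith) (by linarith))

lemma exists_strict_minimizer_of_midpoint_le_sub {E : Type*} [NormedAddCommGroup E]
    [NormedSpace ℝ E] {C : Set E} (hC : IsComplete C) (hne : C.Nonempty) (hconvex : Convex ℝ C)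
    {g : E → ℝ} (hg : LowerSemicontinuousOn g C) (hbdd : BddBelow (g '' C))
    (hmid : ∀ s, ∀ ε > 0, ∃ d > 0, ∀ y ∈ C, ∀ z ∈ C, g y ≤ s → g z ≤ s → ε ≤ ‖y - z‖ →
      g (midpoint ℝ y z) ≤ (g y + g z) / 2 - d) :
    ∃ p ∈ C, ∀ q ∈ C, q ≠ p → g p < g q := by
  refine exists_strict_minimizer_of_dist_lt hC hne hg hbdd fun ε hε => ?_
  obtain ⟨d, hd, hd_mid⟩ := hmid (sInf (g '' C) + 1) ε hε
  refine ⟨min d 1, by positivity, fun y hy z hz hgy hgz => ?_⟩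
  rw [dist_eq_norm]
  by_contra! hyz
  have hinf : sInf (g '' C) ≤ g (midpoint ℝ y z) :=
    csInf_le hbdd (Set.mem_image_of_mem g (hconvex.midpoint_mem hy hz))
  have hd_le : min d 1 ≤ d := min_le_left d 1
  have hone_le : min d 1 ≤ 1 := min_le_right d 1
  linarith [hd_mid y hy z hz (by linarith) (by linarith) hyz]

end StrictMinimizer

section Mean

variable {X : Type*} [TopologicalSpace X]

lemma positiveLinearMap_continuous_of_map_one {μ : (X →ᵇ ℝ) →ₚ[ℝ] ℝ} (hμ : μ 1 = 1) :
    Continuous μ := by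
  have le_norm (f : X →ᵇ ℝ) : μ f ≤ ‖f‖ := by
    have hf : f ≤ ‖f‖ • (1 : X →ᵇ ℝ) := fun i => by
      simpa using (le_abs_self (f i)).trans (f.norm_coe_le_norm i)
    simpa [hμ] using OrderHomClass.mono μ hf
  refine AddMonoidHomClass.continuous_of_bound μ 1 fun f => ?_
  rw [one_mul, Real.norm_eq_abs, abs_le']
  exact ⟨le_norm f, by simpa using le_norm (-f)⟩

lemma norm_birkhoffAverage_le {F : Type*} [SeminormedAddCommGroup F] [NormedSpace ℝ F]
    (φ : X → X) (f : X →ᵇ F) (n : ℕ) (x : X) :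
    ‖birkhoffAverage ℝ φ f n x‖ ≤ ‖f‖ := by
  have hsum : ‖birkhoffSum φ f n x‖ ≤ n * ‖f‖ := by
    simpa [birkhoffSum] using norm_sum_le_of_le (Finset.range n) fun k _ =>
      f.norm_coe_le_norm (φ^[k] x)
  rw [birkhoffAverage, norm_smul, norm_inv, Real.norm_natCast, inv_mul_eq_div]
  exact div_le_of_le_mul₀ n.cast_nonneg (norm_nonneg f) (by rwa [mul_comm])

lemma exists_tendsto_birkhoffAverage_ultrafilter {F : Type*} [SeminormedAddCommGroup F]
    [NormedSpace ℝ F] [ProperSpace F] (U : Ultrafilter ℕ) (φ : X → X) (f : X →ᵇ F) (x : X) :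
    ∃ l, Tendsto (birkhoffAverage ℝ φ f · x) U (𝓝 l) := by
  obtain ⟨l, -, hl⟩ := (isCompact_closedBall (0 : F) ‖f‖).ultrafilter_le_nhds
    (U.map (birkhoffAverage ℝ φ f · x))
    (le_principal_iff.2 <| Ultrafilter.mem_map.2 <| univ_mem' fun n => by
      simpa using norm_birkhoffAverage_le φ f n x)
  exact ⟨l, hl⟩

lemma birkhoffAverage_comp_self (R : Type*) {α M : Type*} [DivisionSemiring R] [AddCommMonoid M]
    [Module R M] (φ : α → α) (g : α → M) (n : ℕ) (x : α) :
    birkhoffAverage R φ (g ∘ φ) n x = birkhoffAverage R φ g n (φ x) := by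
  simp only [birkhoffAverage, birkhoffSum, Function.comp_apply, ← Function.iterate_succ_apply,
    Function.iterate_succ_apply']

lemma exists_invariant_mean [Nonempty X] (φ : C(X, X)) :
    ∃ μ : (X →ᵇ ℝ) →ₚ[ℝ] ℝ, μ 1 = 1 ∧ ∀ f, μ (f.compContinuous φ) = μ f := by
  obtain ⟨x⟩ := ‹Nonempty X›
  choose L hL using fun f : X →ᵇ ℝ =>
    exists_tendsto_birkhoffAverage_ultrafilter (hyperfilter ℕ) φ f x
  have hL_eq {f : X →ᵇ ℝ} {l : ℝ}
      (h : Tendsto (birkhoffAverage ℝ φ f · x) (hyperfilter ℕ) (𝓝 l)) : L f = l :=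
    tendsto_nhds_unique (hL f) h
  let Λ : (X →ᵇ ℝ) →ₗ[ℝ] ℝ :=
    { toFun := L
      map_add' f g := hL_eq <| by
        simpa [birkhoffAverage_add] using (hL f).add (hL g)
      map_smul' c f := hL_eq <| by
        simpa [birkhoffAverage, birkhoffSum, Finset.mul_sum, mul_left_comm]
          using (hL f).const_mul c }
  have hΛ_nonneg (f : X →ᵇ ℝ) (hf : 0 ≤ f) : 0 ≤ Λ f := ge_of_tendsto' (hL f) fun n =>
    smul_nonneg (inv_nonneg.2 n.cast_nonneg) (Finset.sum_nonneg fun k _ => hf (φ^[k] x))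
  have hL_one : L 1 = 1 := by
    refine hL_eq (tendsto_const_nhds.congr' ?_)
    filter_upwards [(eventually_ne_atTop 0).filter_mono Nat.hyperfilter_le_atTop] with n hn
    rw [birkhoffAverage_of_comp_eq ℝ rfl (Nat.cast_ne_zero.2 hn),
      BoundedContinuousFunction.coe_one, Pi.one_apply]
  have hL_comp (f : X →ᵇ ℝ) : L (f.compContinuous φ) = L f := by
    have hdiff := (tendsto_birkhoffAverage_apply_sub_birkhoffAverage' ℝ f.isBounded_range φ x)
      |>.mono_left Nat.hyperfilter_le_atTop
    exact hL_eq <| by simpa [birkhoffAverage_comp_self] using hdiff.add (hL f)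
  exact ⟨.mk₀ Λ hΛ_nonneg, hL_one, hL_comp⟩

end Mean

section SqDist

variable {X E : Type*} [TopologicalSpace X] [NormedAddCommGroup E]

/-- The bounded function `i ↦ ‖x i - y‖²`, packaged so that a mean can be applied to it. -/
noncomputable def sqDist (x : X →ᵇ E) (y : E) : X →ᵇ ℝ :=
  (x - BoundedContinuousFunction.const X y).normComp ^ 2

@[simp]
lemma sqDist_apply (x : X →ᵇ E) (y : E) (i : X) : sqDist x y i = ‖x i - y‖ ^ 2 := rfl

lemma sqDist_nonneg (x : X →ᵇ E) (y : E) : 0 ≤ sqDist x y := fun _ => sq_nonneg _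

lemma continuous_sqDist (x : X →ᵇ E) : Continuous (sqDist x) := by
  have hconst : Continuous (BoundedContinuousFunction.const X : E → X →ᵇ E) :=
    (LipschitzWith.mk_one fun y z =>
      (BoundedContinuousFunction.dist_le dist_nonneg).2 fun _ => le_rfl).continuous
  exact ((BoundedContinuousFunction.continuous_comp lipschitzWith_one_norm).comp
    (continuous_const.sub hconst)).pow 2

variable {μ : (X →ᵇ ℝ) →ₚ[ℝ] ℝ}

lemma norm_sq_le_two_mul_mean_sqDist (hμ : μ 1 = 1) (x : X →ᵇ E) (y : E) :
    ‖y‖ ^ 2 ≤ 2 * ‖x‖ ^ 2 + 2 * μ (sqDist x y) := by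
  have hle : ‖y‖ ^ 2 • (1 : X →ᵇ ℝ) ≤ (2 * ‖x‖ ^ 2) • (1 : X →ᵇ ℝ) + (2 : ℝ) • sqDist x y := by
    intro i
    have hy : ‖y‖ ≤ ‖x‖ + ‖x i - y‖ :=
      (norm_le_norm_add_norm_sub (x i) y).trans (by gcongr; exact x.norm_coe_le_norm i)
    simpa [mul_add] using (pow_le_pow_left₀ (norm_nonneg y) hy 2).trans add_sq_le
  simpa [hμ] using OrderHomClass.mono μ hle

lemma exists_forall_mean_sqDist_midpoint_le_sub [NormedSpace ℝ E] [UniformConvexSpace E]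
    (hμ : μ 1 = 1) (x : X →ᵇ E) (R : ℝ) {ε : ℝ} (hε : 0 < ε) :
    ∃ d > 0, ∀ y z, ‖y‖ ≤ R → ‖z‖ ≤ R → ε ≤ ‖y - z‖ →
      μ (sqDist x (midpoint ℝ y z)) ≤ (μ (sqDist x y) + μ (sqDist x z)) / 2 - d := by
  obtain ⟨d, hd, hconv⟩ := exists_forall_norm_midpoint_sq_le_sub (E := E) (‖x‖ + R) hε
  refine ⟨d, hd, fun y z hy hz hyz => ?_⟩
  have hle : sqDist x (midpoint ℝ y z) ≤
      (2⁻¹ : ℝ) • (sqDist x y + sqDist x z) - d • (1 : X →ᵇ ℝ) := by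
    intro i
    have hmid : x i - midpoint ℝ y z = midpoint ℝ (x i - y) (x i - z) := by
      simpa using midpoint_vsub_midpoint (R := ℝ) (x i) (x i) y z
    have hbound {v : E} (hv : ‖v‖ ≤ R) : ‖x i - v‖ ≤ ‖x‖ + R :=
      norm_sub_le_of_le (x.norm_coe_le_norm i) hv
    have hsep : ε ≤ ‖(x i - y) - (x i - z)‖ := by rwa [sub_sub_sub_cancel_left, norm_sub_rev]
    simpa [hmid, inv_mul_eq_div, add_div] using hconv _ _ (hbound hy) (hbound hz) hsep
  simpa [hμ, inv_mul_eq_div, add_div] using OrderHomClass.mono μ hle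

lemma exists_strict_minimizer_mean_sqDist [NormedSpace ℝ E] [UniformConvexSpace E]
    (hμ : μ 1 = 1) (x : X →ᵇ E) {C : Set E} (hC : IsComplete C) (hne : C.Nonempty)
    (hconvex : Convex ℝ C) :
    ∃ p ∈ C, ∀ q ∈ C, q ≠ p → μ (sqDist x p) < μ (sqDist x q) := by
  refine exists_strict_minimizer_of_midpoint_le_sub hC hne hconvex
    (((positiveLinearMap_continuous_of_map_one hμ).comp (continuous_sqDist x)).lowerSemicontinuous
      |>.lowerSemicontinuousOn C)
    ⟨0, ?_⟩ fun s ε hε => ?_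
  · rintro _ ⟨y, -, rfl⟩
    exact map_nonneg μ (sqDist_nonneg x y)
  · obtain ⟨d, hd, hconv⟩ :=
      exists_forall_mean_sqDist_midpoint_le_sub hμ x √(2 * ‖x‖ ^ 2 + 2 * s) hε
    have hbound {y : E} (hy : μ (sqDist x y) ≤ s) : ‖y‖ ≤ √(2 * ‖x‖ ^ 2 + 2 * s) :=
      Real.le_sqrt_of_sq_le <| (norm_sq_le_two_mul_mean_sqDist hμ x y).trans (by gcongr)
    exact ⟨d, hd, fun y _ z _ hy hz => hconv y z (hbound hy) (hbound hz)⟩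

lemma mean_sqDist_hybrid_nonpos {φ : C(X, X)} (hφ : ∀ f, μ (f.compContinuous φ) = μ f)
    {x : X →ᵇ E} {α β γ : ℝ} {p q : E}
    (h : ∀ i, α * ‖x (φ i) - q‖ ^ 2 + β * (‖x i - q‖ ^ 2 + ‖x (φ i) - p‖ ^ 2)
      + γ * ‖x i - p‖ ^ 2 ≤ 0) :
    (α + β) * μ (sqDist x q) + (β + γ) * μ (sqDist x p) ≤ 0 := by
  have hle : α • (sqDist x q).compContinuous φ
      + β • (sqDist x q + (sqDist x p).compContinuous φ) + γ • sqDist x p ≤ 0 := h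
  have hmean := OrderHomClass.mono μ hle
  simp only [map_add, map_smul, map_zero, hφ, smul_eq_mul] at hmean
  linarith

end SqDist

/-- Let `E` be a uniformly convex real Banach space, `C` a nonempty closed
convex subset of `E`, and `T` an `(α,β,γ,δ)`-symmetric generalized hybrid self-mapping of `C`
with `α+2β+γ ≥ 0`, `α+β > 0`, `δ ≥ 0`. If the orbit `{Tⁿx : n ∈ ℕ}` is bounded for some
`x ∈ C`, then `T` has a fixed point in `C`. -/
theorem symm_gen_hybrid_boundedOrbit_fixedPoint
    {E : Type*} [NormedAddCommGroup E] [NormedSpace ℝ E] [CompleteSpace E]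
    [UniformConvexSpace E]
    (C : Set E) (hCne : C.Nonempty) (hCcl : IsClosed C) (hCcv : Convex ℝ C)
    (T : E → E) (hTself : Set.MapsTo T C C)
    (α β γ δ : ℝ)
    (hhyb : ∀ x ∈ C, ∀ y ∈ C,
      α * ‖T x - T y‖ ^ 2 + β * (‖x - T y‖ ^ 2 + ‖T x - y‖ ^ 2) + γ * ‖x - y‖ ^ 2
        + δ * (‖x - T x‖ ^ 2 + ‖y - T y‖ ^ 2) ≤ 0)
    (h1 : α + 2 * β + γ ≥ 0) (h2 : α + β > 0) (h3 : δ ≥ 0)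
    (hbdd : ∃ x ∈ C, Bornology.IsBounded (Set.range fun n : ℕ => T^[n] x)) :
    ∃ p ∈ C, T p = p := by
  obtain ⟨x₀, hx₀, hbounded⟩ := hbdd
  obtain ⟨M, hM⟩ := isBounded_iff_forall_norm_le.1 hbounded
  let orbit : ℕ →ᵇ E := .ofNormedAddCommGroupDiscrete (fun n => T^[n] x₀) M
    fun n => hM _ (Set.mem_range_self n)
  let shift : C(ℕ, ℕ) := ⟨Nat.succ, continuous_of_discreteTopology⟩
  obtain ⟨μ, hμ_one, hμ_shift⟩ := exists_invariant_mean shift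
  obtain ⟨p, hpC, hp⟩ :=
    exists_strict_minimizer_mean_sqDist hμ_one orbit hCcl.isComplete hCne hCcv
  have horbit (n : ℕ) : T (orbit n) = orbit (shift n) :=
    (Function.iterate_succ_apply' T n x₀).symm
  have hmean : (α + β) * μ (sqDist orbit (T p)) + (β + γ) * μ (sqDist orbit p) ≤ 0 := by
    refine mean_sqDist_hybrid_nonpos hμ_shift fun n => ?_
    rw [← horbit]
    refine (le_add_of_nonneg_right ?_).trans (hhyb _ (hTself.iterate n hx₀) p hpC)
    positivity
  have hp_nonneg : 0 ≤ μ (sqDist orbit p) := map_nonneg μ (sqDist_nonneg orbit p)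
  have hTp_le : μ (sqDist orbit (T p)) ≤ μ (sqDist orbit p) := by
    refine le_of_mul_le_mul_left ?_ h2
    linarith [mul_nonneg h1 hp_nonneg]
  exact ⟨p, hpC, by_contra fun hTp => (hp _ (hTself hpC) hTp).not_ge hTp_le⟩
end

section
/- Let E be a uniformly convex real Banach space, C a nonempty closed convex subset of E, and T a quasi-nonexpansive self-mapping of C with a fixed point q. Let {λₙ} ⊆ [0,1] and {γₙ} ⊆ [a,1] with 0 < a ≤ 1, suppose liminf λₙ(1−λₙ) > 0, and define the Ishikawa sequence by x₁ = x ∈ C, yₙ = (1−λₙ)xₙ + λₙTxₙ, x_{n+1} = (1−γₙ)xₙ + γₙTyₙ. Then ‖xₙ − Txₙ‖ → 0 as n → ∞. -/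
open Filter Topology

/-!
Every step of the iteration decreases the distance to `q`, so the distances `‖q - xₙ‖` converge and
their successive differences tend to `0`. Convexity of the norm bounds the `n`-th difference below
by `γₙ (‖q - xₙ‖ - ‖q - yₙ‖)`, and `γₙ ≥ a > 0`, so `‖q - xₙ‖ - ‖q - yₙ‖ → 0`. But `q - yₙ` is a
convex combination of `q - xₙ` and `q - T xₙ`, two vectors of the ball of radius `‖q - xₙ‖`, with
weights bounded away from `0` and `1`; if it comes close to the boundary of the ball, uniform
convexity forces the two vectors together.
-/

section UniformConvexity

theorem exists_forall_le_norm_add_le_two_mul_sub (E : Type*) [SeminormedAddCommGroup E]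
    [NormedSpace ℝ E] [UniformConvexSpace E] {ε : ℝ} (hε : 0 < ε) (R : ℝ) :
    ∃ δ, 0 < δ ∧ ∀ r ≤ R, ∀ ⦃u : E⦄, ‖u‖ ≤ r → ∀ ⦃v : E⦄, ‖v‖ ≤ r → ε ≤ ‖u - v‖ →
      ‖u + v‖ ≤ 2 * r - δ := by
  obtain hR | hR := le_or_gt R 0
  · refine ⟨1, one_pos, fun r hr u hu v hv huv => ?_⟩
    linarith [norm_sub_le u v]
  obtain ⟨δ, hδ, hunit⟩ := exists_forall_closed_ball_dist_add_le_two_sub E (div_pos hε hR)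
  refine ⟨δ * (ε / 2), by positivity, fun r hr u hu v hv huv => ?_⟩
  have hεr : ε / 2 ≤ r := by linarith [norm_sub_le u v]
  have hr0 : 0 < r := (half_pos hε).trans_le hεr
  have norm_inv_smul (w : E) : ‖r⁻¹ • w‖ = ‖w‖ / r := by
    rw [norm_smul_of_nonneg (inv_nonneg.2 hr0.le), ← div_eq_inv_mul]
  have hball (w : E) (hw : ‖w‖ ≤ r) : ‖r⁻¹ • w‖ ≤ 1 := by
    rwa [norm_inv_smul, div_le_one hr0]
  have hsep : ε / R ≤ ‖r⁻¹ • u - r⁻¹ • v‖ := by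
    rw [← smul_sub, norm_inv_smul]
    gcongr
  have hadd := hunit (hball u hu) (hball v hv) hsep
  rw [← smul_add, norm_inv_smul, div_le_iff₀ hr0] at hadd
  calc
    ‖u + v‖ ≤ (2 - δ) * r := hadd
    _ = 2 * r - δ * r := sub_mul ..
    _ ≤ 2 * r - δ * (ε / 2) := by gcongr

variable {E : Type*} [SeminormedAddCommGroup E] [NormedSpace ℝ E]

theorem norm_convexCombo_le_of_norm_add_le {u v : E} {r δ c t : ℝ} (hu : ‖u‖ ≤ r) (hv : ‖v‖ ≤ r)
    (huv : ‖u + v‖ ≤ 2 * r - δ) (hc : 0 ≤ c) (ht : t ∈ Set.Icc c (1 - c)) :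
    ‖(1 - t) • u + t • v‖ ≤ r - c * δ := by
  have hu_coeff : 0 ≤ 1 - t - c := by linarith [ht.2]
  have hv_coeff : 0 ≤ t - c := sub_nonneg.2 ht.1
  calc
    ‖(1 - t) • u + t • v‖ = ‖c • (u + v) + (1 - t - c) • u + (t - c) • v‖ := by
      congr 1
      module
    _ ≤ ‖c • (u + v)‖ + ‖(1 - t - c) • u‖ + ‖(t - c) • v‖ := norm_add₃_le
    _ = c * ‖u + v‖ + (1 - t - c) * ‖u‖ + (t - c) * ‖v‖ := by
      rw [norm_smul_of_nonneg hc, norm_smul_of_nonneg hu_coeff, norm_smul_of_nonneg hv_coeff]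
    _ ≤ c * (2 * r - δ) + (1 - t - c) * r + (t - c) * r := by gcongr
    _ = r - c * δ := by ring

/-- Schu's lemma, for radii `r i` that are merely bounded instead of convergent. -/
theorem tendsto_norm_sub_of_tendsto_sub_norm_convexCombo [UniformConvexSpace E] {ι : Type*}
    {l : Filter ι} {u v : ι → E} {r t : ι → ℝ} {c : ℝ} (hc : 0 < c)
    (ht : ∀ᶠ i in l, t i ∈ Set.Icc c (1 - c)) (hr : l.IsBoundedUnder (· ≤ ·) r)
    (hu : ∀ᶠ i in l, ‖u i‖ ≤ r i) (hv : ∀ᶠ i in l, ‖v i‖ ≤ r i)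
    (hlim : Tendsto (fun i => r i - ‖(1 - t i) • u i + t i • v i‖) l (𝓝 0)) :
    Tendsto (fun i => ‖u i - v i‖) l (𝓝 0) := by
  obtain ⟨R, hR⟩ := hr.eventually_le
  rw [Metric.tendsto_nhds]
  intro ε hε
  obtain ⟨δ, hδ, hmid⟩ := exists_forall_le_norm_add_le_two_mul_sub E hε R
  filter_upwards [ht, hR, hu, hv, hlim.eventually_lt_const (mul_pos hc hδ)]
    with i hti hRi hui hvi hclose
  rw [dist_zero_right, norm_norm]
  by_contra! hfar
  have hdeep := norm_convexCombo_le_of_norm_add_le hui hvi (hmid _ hRi hui hvi hfar) hc.le hti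
  linarith

theorem mul_norm_sub_sub_norm_sub_le (q z w : E) {t : ℝ} (ht : t ∈ Set.Icc (0 : ℝ) 1) :
    t * (‖q - z‖ - ‖q - w‖) ≤ ‖q - z‖ - ‖q - ((1 - t) • z + t • w)‖ := by
  have hconv := (convexOn_norm convex_univ).2 (Set.mem_univ (q - z)) (Set.mem_univ (q - w))
    (sub_nonneg.2 ht.2) ht.1 (sub_add_cancel 1 t)
  have hcombo : (1 - t) • (q - z) + t • (q - w) = q - ((1 - t) • z + t • w) := by module
  rw [hcombo, smul_eq_mul, smul_eq_mul] at hconv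
  linarith

end UniformConvexity

section RealSequences

theorem exists_eventually_mem_Icc_of_liminf_mul_one_sub_pos {ι : Type*} {l : Filter ι} {t : ι → ℝ}
    (ht : ∀ i, t i ∈ Set.Icc (0 : ℝ) 1) (hliminf : 0 < liminf (fun i => t i * (1 - t i)) l) :
    ∃ c, 0 < c ∧ ∀ᶠ i in l, t i ∈ Set.Icc c (1 - c) := by
  obtain ⟨c, hc0, hc⟩ := exists_between hliminf
  have hbdd : l.IsBoundedUnder (· ≥ ·) fun i => t i * (1 - t i) :=
    isBoundedUnder_of ⟨0, fun i => mul_nonneg (ht i).1 (sub_nonneg.2 (ht i).2)⟩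
  refine ⟨c, hc0, (eventually_lt_of_lt_liminf hc hbdd).mono fun i hi => ?_⟩
  obtain ⟨h0, h1⟩ := ht i
  constructor <;> nlinarith

theorem tendsto_sub_succ_of_antitone {f : ℕ → ℝ} (hf : Antitone f)
    (hbdd : BddBelow (Set.range f)) : Tendsto (fun n => f n - f (n + 1)) atTop (𝓝 0) := by
  have hlim := tendsto_atTop_ciInf hf hbdd
  simpa only [sub_self] using hlim.sub ((tendsto_add_atTop_iff_nat 1).2 hlim)

end RealSequences

/-- The Ishikawa iteration of `T` with parameters `λₙ = lam n` and `γₙ = gam n`, indexed from `0`: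
`x` is the sequence of iterates and `y` that of the intermediate points. -/
structure IsIshikawaIteration {E : Type*} [AddCommGroup E] [Module ℝ E] (T : E → E)
    (lam gam : ℕ → ℝ) (x y : ℕ → E) : Prop where
  y_eq : ∀ n, y n = (1 - lam n) • x n + lam n • T (x n)
  x_succ : ∀ n, x (n + 1) = (1 - gam n) • x n + gam n • T (y n)

namespace IsIshikawaIteration

section Membership

variable {E : Type*} [AddCommGroup E] [Module ℝ E] {C : Set E} {T : E → E} {lam gam : ℕ → ℝ}
  {x y : ℕ → E}

theorem y_mem_of_x_mem (h : IsIshikawaIteration T lam gam x y) (hC : Convex ℝ C)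
    (hTC : Set.MapsTo T C C) {n : ℕ} (hlam : lam n ∈ Set.Icc (0 : ℝ) 1) (hx : x n ∈ C) :
    y n ∈ C := by
  rw [h.y_eq]
  exact hC hx (hTC hx) (sub_nonneg.2 hlam.2) hlam.1 (sub_add_cancel 1 _)

theorem x_mem (h : IsIshikawaIteration T lam gam x y) (hC : Convex ℝ C)
    (hTC : Set.MapsTo T C C) (hlam : ∀ n, lam n ∈ Set.Icc (0 : ℝ) 1)
    (hgam : ∀ n, gam n ∈ Set.Icc (0 : ℝ) 1) (hx₀ : x 0 ∈ C) (n : ℕ) : x n ∈ C := by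
  induction n with
  | zero => exact hx₀
  | succ n hx =>
    rw [h.x_succ]
    exact hC hx (hTC (h.y_mem_of_x_mem hC hTC (hlam n) hx)) (sub_nonneg.2 (hgam n).2) (hgam n).1
      (sub_add_cancel 1 _)

end Membership

section Distance

variable {E : Type*} [SeminormedAddCommGroup E] [NormedSpace ℝ E] {T : E → E} {lam gam : ℕ → ℝ}
  {x y : ℕ → E} {q : E}

theorem norm_sub_y_le (h : IsIshikawaIteration T lam gam x y) {n : ℕ}
    (hlam : lam n ∈ Set.Icc (0 : ℝ) 1) (hTx : ‖q - T (x n)‖ ≤ ‖q - x n‖) :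
    ‖q - y n‖ ≤ ‖q - x n‖ := by
  rw [h.y_eq, ← sub_nonneg]
  exact (mul_nonneg hlam.1 (sub_nonneg.2 hTx)).trans (mul_norm_sub_sub_norm_sub_le q _ _ hlam)

theorem gam_mul_norm_sub_sub_norm_sub_le (h : IsIshikawaIteration T lam gam x y) {n : ℕ}
    (hgam : gam n ∈ Set.Icc (0 : ℝ) 1) (hTy : ‖q - T (y n)‖ ≤ ‖q - y n‖) :
    gam n * (‖q - x n‖ - ‖q - y n‖) ≤ ‖q - x n‖ - ‖q - x (n + 1)‖ := by
  rw [h.x_succ]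
  calc
    gam n * (‖q - x n‖ - ‖q - y n‖) ≤ gam n * (‖q - x n‖ - ‖q - T (y n)‖) :=
      mul_le_mul_of_nonneg_left (sub_le_sub_left hTy _) hgam.1
    _ ≤ _ := mul_norm_sub_sub_norm_sub_le q _ _ hgam

theorem antitone_norm_sub_x (h : IsIshikawaIteration T lam gam x y)
    (hlam : ∀ n, lam n ∈ Set.Icc (0 : ℝ) 1) (hgam : ∀ n, gam n ∈ Set.Icc (0 : ℝ) 1)
    (hTx : ∀ n, ‖q - T (x n)‖ ≤ ‖q - x n‖) (hTy : ∀ n, ‖q - T (y n)‖ ≤ ‖q - y n‖) :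
    Antitone fun n => ‖q - x n‖ :=
  antitone_nat_of_succ_le fun n => sub_nonneg.1 <|
    (mul_nonneg (hgam n).1 (sub_nonneg.2 (h.norm_sub_y_le (hlam n) (hTx n)))).trans
      (h.gam_mul_norm_sub_sub_norm_sub_le (hgam n) (hTy n))

theorem tendsto_norm_sub_x_sub_norm_sub_y (h : IsIshikawaIteration T lam gam x y)
    (hlam : ∀ n, lam n ∈ Set.Icc (0 : ℝ) 1) {a : ℝ} (ha : 0 < a)
    (hgam : ∀ n, gam n ∈ Set.Icc a 1) (hTx : ∀ n, ‖q - T (x n)‖ ≤ ‖q - x n‖)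
    (hTy : ∀ n, ‖q - T (y n)‖ ≤ ‖q - y n‖) :
    Tendsto (fun n => ‖q - x n‖ - ‖q - y n‖) atTop (𝓝 0) := by
  have hgam₀ n : gam n ∈ Set.Icc (0 : ℝ) 1 := Set.Icc_subset_Icc_left ha.le (hgam n)
  have hnonneg n : 0 ≤ ‖q - x n‖ - ‖q - y n‖ := sub_nonneg.2 (h.norm_sub_y_le (hlam n) (hTx n))
  have hdrop : Tendsto (fun n => (‖q - x n‖ - ‖q - x (n + 1)‖) / a) atTop (𝓝 0) := by
    have hbdd : BddBelow (Set.range fun n => ‖q - x n‖) :=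
      ⟨0, Set.forall_mem_range.2 fun _ => norm_nonneg _⟩
    simpa only [zero_div] using
      (tendsto_sub_succ_of_antitone (h.antitone_norm_sub_x hlam hgam₀ hTx hTy) hbdd).div_const a
  refine squeeze_zero hnonneg (fun n => ?_) hdrop
  rw [le_div_iff₀' ha]
  exact (mul_le_mul_of_nonneg_right (hgam n).1 (hnonneg n)).trans
    (h.gam_mul_norm_sub_sub_norm_sub_le (hgam₀ n) (hTy n))

end Distance

end IsIshikawaIteration

theorem ishikawa_quasiNonexpansive_asymptotic_regularity_general
    {E : Type*} [SeminormedAddCommGroup E] [NormedSpace ℝ E] [UniformConvexSpace E]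
    {C : Set E} (hC : Convex ℝ C) {T : E → E} (hTC : Set.MapsTo T C C)
    {q : E} (hT : ∀ z ∈ C, ‖q - T z‖ ≤ ‖q - z‖) {a : ℝ} (ha : 0 < a) {lam gam : ℕ → ℝ}
    (hlam : ∀ n, lam n ∈ Set.Icc (0 : ℝ) 1) (hgam : ∀ n, gam n ∈ Set.Icc a 1)
    (hliminf : 0 < liminf (fun n => lam n * (1 - lam n)) atTop)
    {x y : ℕ → E} (hx₀ : x 0 ∈ C) (h : IsIshikawaIteration T lam gam x y) :
    Tendsto (fun n => ‖x n - T (x n)‖) atTop (𝓝 0) := by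
  have hgam₀ n : gam n ∈ Set.Icc (0 : ℝ) 1 := Set.Icc_subset_Icc_left ha.le (hgam n)
  have hxC := h.x_mem hC hTC hlam hgam₀ hx₀
  have hTx n : ‖q - T (x n)‖ ≤ ‖q - x n‖ := hT _ (hxC n)
  have hTy n : ‖q - T (y n)‖ ≤ ‖q - y n‖ := hT _ (h.y_mem_of_x_mem hC hTC (hlam n) (hxC n))
  have hbdd : atTop.IsBoundedUnder (· ≤ ·) fun n => ‖q - x n‖ :=
    isBoundedUnder_of ⟨‖q - x 0‖, fun n => h.antitone_norm_sub_x hlam hgam₀ hTx hTy n.zero_le⟩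
  have hcombo n : (1 - lam n) • (q - x n) + lam n • (q - T (x n)) = q - y n := by
    rw [h.y_eq]
    module
  have hlim : Tendsto (fun n => ‖q - x n‖ -
      ‖(1 - lam n) • (q - x n) + lam n • (q - T (x n))‖) atTop (𝓝 0) := by
    simpa only [hcombo] using h.tendsto_norm_sub_x_sub_norm_sub_y hlam ha hgam hTx hTy
  obtain ⟨c, hc, hlamc⟩ := exists_eventually_mem_Icc_of_liminf_mul_one_sub_pos hlam hliminf
  have hsub := tendsto_norm_sub_of_tendsto_sub_norm_convexCombo hc hlamc hbdd
    (.of_forall fun _ => le_rfl) (.of_forall hTx) hlim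
  simpa only [sub_sub_sub_cancel_left, norm_sub_rev (T _)] using hsub

/-- Let `E` be a uniformly convex real Banach space, `C` a nonempty closed
convex subset of `E`, and `T` a quasi-nonexpansive self-mapping of `C` with a fixed point `q`.
For the Ishikawa iteration with `λₙ ∈ [0,1]`, `γₙ ∈ [a,1]`, `0 < a ≤ 1` and
`liminf λₙ(1−λₙ) > 0`, one has `‖xₙ − Txₙ‖ → 0`. -/
theorem ishikawa_quasiNonexpansive_asymptotic_regularity
    {E : Type*} [NormedAddCommGroup E] [NormedSpace ℝ E] [CompleteSpace E]
    [UniformConvexSpace E]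
    (C : Set E) (hCne : C.Nonempty) (hCcl : IsClosed C) (hCcv : Convex ℝ C)
    (T : E → E) (hTself : Set.MapsTo T C C)
    (hquasi : ∀ p ∈ C, T p = p → ∀ y ∈ C, ‖p - T y‖ ≤ ‖p - y‖)
    (q : E) (hq : q ∈ C) (hqfix : T q = q)
    (a : ℝ) (ha0 : 0 < a) (ha1 : a ≤ 1)
    (lam gam : ℕ → ℝ)
    (hlam : ∀ n, lam n ∈ Set.Icc (0 : ℝ) 1) (hgam : ∀ n, gam n ∈ Set.Icc a 1)
    (hliminf : 0 < Filter.liminf (fun n => lam n * (1 - lam n)) atTop)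
    (x y : ℕ → E) (x₀ : E) (hx₀ : x₀ ∈ C) (hinit : x 0 = x₀)
    (hy : ∀ n, y n = (1 - lam n) • x n + lam n • T (x n))
    (hxs : ∀ n, x (n + 1) = (1 - gam n) • x n + gam n • T (y n)) :
    Tendsto (fun n => ‖x n - T (x n)‖) atTop (𝓝 0) := by
  exact ishikawa_quasiNonexpansive_asymptotic_regularity_general hCcv hTself
    (hquasi q hq hqfix) ha0 hlam hgam hliminf (hinit ▸ hx₀) ⟨hy, hxs⟩
end

section
/- Let E be a uniformly convex real Banach space satisfying Opial's condition, C a nonempty closed convex subset of E, and T a hybrid self-mapping of C with nonempty fixed point set F(T). Let {λₙ} ⊆ [0,1] and {γₙ} ⊆ [a,1] with 0 < a ≤ 1, suppose liminf λₙ(1−λₙ) > 0, and define the Ishikawa sequence by x₁ = x ∈ C, yₙ = (1−λₙ)xₙ + λₙTxₙ, x_{n+1} = (1−γₙ)xₙ + γₙTyₙ. Then {xₙ} converges weakly to some point x₀ ∈ F(T). -/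
open Filter Topology

/-!
For every fixed point `p` of `T` the distances `‖xₙ - p‖` decrease, and the decrease at step `n`
dominates `a (‖xₙ - p‖ - ‖yₙ - p‖)`; so this gap tends to zero. Since `yₙ - p` is a convex
combination of `xₙ - p` and `T xₙ - p`, with weights bounded away from `0`, and `T xₙ - p` is not
longer than `xₙ - p`, uniform convexity forces `‖xₙ - T xₙ‖ → 0`. A hybrid map satisfies
`‖x - T y‖ ≤ ‖x - y‖ + 3 ‖x - T x‖`, hence under Opial's condition every weak cluster point of `xₙ`
is a fixed point. Such cluster points exist because bounded closed convex sets are weakly compact,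
and Opial's condition shows that there is only one, the distances to each of them being convergent.

Weak compactness is obtained without reflexivity: along an ultrafilter, the points of almost minimal
norm in the closed convex hulls of its members form a Cauchy filter, whose limit lies in all these
hulls and is therefore the weak limit of the ultrafilter.
-/

section WeakTopology

theorem tendsto_toWeakSpace_iff {𝕜 E ι : Type*} [CommSemiring 𝕜] [TopologicalSpace 𝕜]
    [ContinuousAdd 𝕜] [ContinuousConstSMul 𝕜 𝕜] [AddCommMonoid E] [Module 𝕜 E]
    [TopologicalSpace E] {l : Filter ι} {z : ι → E} {u : E} :
    Tendsto (fun i => toWeakSpace 𝕜 E (z i)) l (𝓝 (toWeakSpace 𝕜 E u)) ↔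
      ∀ f : StrongDual 𝕜 E, Tendsto (fun i => f (z i)) l (𝓝 (f u)) :=
  (IsInducing.induced fun (v : WeakSpace 𝕜 E) (f : StrongDual 𝕜 E) =>
    (topDualPairing 𝕜 E).flip v f).tendsto_nhds_iff.trans tendsto_pi_nhds

theorem tendsto_toWeakSpace_of_forall_mem_closedConvexHull {E : Type*} [AddCommGroup E]
    [Module ℝ E] [TopologicalSpace E] {U : Ultrafilter E} {u : E}
    (hu : ∀ s ∈ U, u ∈ closedConvexHull ℝ s) :
    Tendsto (toWeakSpace ℝ E) U (𝓝 (toWeakSpace ℝ E u)) := by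
  have eventually_lt (f : StrongDual ℝ E) {b : ℝ} (hb : b < f u) : ∀ᶠ z in U, b < f z := by
    by_contra h
    have hle : {z | f z ≤ b} ∈ U := (Ultrafilter.eventually_not.2 h).mono fun z => not_lt.1
    exact hb.not_ge (closedConvexHull_min subset_rfl (convex_halfSpace_le f.isLinear b)
      (isClosed_le f.continuous continuous_const) (hu _ hle))
  exact tendsto_toWeakSpace_iff.2 fun f => tendsto_order.2 ⟨fun b hb => eventually_lt f hb,
    fun b hb => by simpa using eventually_lt (-f) (b := -b) (by simpa using hb)⟩

variable {𝕜 E : Type*} [RCLike 𝕜] [NormedAddCommGroup E] [NormedSpace 𝕜 E]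

theorem exists_seq_dual_eq_zero_of_isSeparable {s : Set E} (hs : TopologicalSpace.IsSeparable s) :
    ∃ g : ℕ → StrongDual 𝕜 E, ∀ w ∈ s, (∀ k, g k w = 0) → w = 0 := by
  obtain ⟨c, hc, hsc⟩ := hs
  rcases c.eq_empty_or_nonempty with rfl | hne
  · exact ⟨0, fun w hw => by simpa using hsc hw⟩
  obtain ⟨y, rfl⟩ := hc.exists_eq_range hne
  choose g hg_norm hgy using fun k => exists_dual_vector'' 𝕜 (y k)
  refine ⟨g, fun w hw hgw => ?_⟩
  by_contra hw0
  obtain ⟨_, ⟨k, rfl⟩, hwy⟩ := Metric.mem_closure_iff.1 (hsc hw) (‖w‖ / 2) (by positivity)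
  rw [dist_eq_norm'] at hwy
  have hy : ‖y k‖ ≤ ‖y k - w‖ :=
    calc ‖y k‖ = ‖g k (y k - w)‖ := by simp [hgw k, hgy k]
      _ ≤ 1 * ‖y k - w‖ := (g k).le_of_opNorm_le (hg_norm k) _
      _ = ‖y k - w‖ := one_mul _
  linarith [norm_le_norm_add_norm_sub' w (y k), norm_sub_rev w (y k)]

theorem metrizableSpace_of_isCompact_of_isSeparable {s : Set E}
    (hcomp : IsCompact (toWeakSpace 𝕜 E '' s)) (hsep : TopologicalSpace.IsSeparable s) :
    TopologicalSpace.MetrizableSpace (toWeakSpace 𝕜 E '' s) := by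
  have : CompactSpace (toWeakSpace 𝕜 E '' s) := isCompact_iff_compactSpace.1 hcomp
  obtain ⟨g, hg⟩ := exists_seq_dual_eq_zero_of_isSeparable (𝕜 := 𝕜) (hsep.span (R := 𝕜))
  refine Metric.PiNatEmbed.TopologicalSpace.MetrizableSpace.of_countable_separating
    (fun k (w : toWeakSpace 𝕜 E '' s) => g k ((toWeakSpace 𝕜 E).symm w))
    (fun k => (WeakBilin.eval_continuous (topDualPairing 𝕜 E).flip (g k)).comp
      continuous_subtype_val) ?_
  rintro ⟨_, v, hv, rfl⟩ ⟨_, w, hw, rfl⟩ hvw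
  by_contra! hgvw
  have hsub : v - w = 0 := hg _ (Submodule.sub_mem _ (Submodule.subset_span hv)
    (Submodule.subset_span hw)) fun k => by
      simpa [sub_eq_zero] using hgvw k
  exact hvw (Subtype.ext (congrArg (toWeakSpace 𝕜 E) (sub_eq_zero.1 hsub)))

end WeakTopology

section UniformlyConvex

variable {E : Type*} [SeminormedAddCommGroup E] [NormedSpace ℝ E]

theorem norm_convexCombo_le {u v : E} {R t : ℝ} (hu : ‖u‖ ≤ R) (hv : ‖v‖ ≤ R)
    (ht : t ∈ Set.Icc (0 : ℝ) 1) :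
    ‖(1 - t) • u + t • v‖ ≤ R - t * (1 - t) * (2 * R - ‖u + v‖) := by
  wlog hhalf : t ≤ 1 / 2 generalizing u v t
  · have := this hv hu (t := 1 - t) ⟨by linarith [ht.2], by linarith [ht.1]⟩ (by linarith)
    rwa [sub_sub_cancel, add_comm, add_comm v, mul_comm (1 - t)] at this
  have hgap : 0 ≤ 2 * R - ‖u + v‖ := by linarith [norm_add_le u v]
  calc ‖(1 - t) • u + t • v‖ = ‖(1 - 2 * t) • u + t • (u + v)‖ := by congr 1; module
    _ ≤ (1 - 2 * t) * ‖u‖ + t * ‖u + v‖ := by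
      rw [← norm_smul_of_nonneg ht.1, ← norm_smul_of_nonneg (show 0 ≤ 1 - 2 * t by linarith)]
      exact norm_add_le _ _
    _ ≤ (1 - 2 * t) * R + t * ‖u + v‖ := by gcongr; linarith
    _ = R - t * (2 * R - ‖u + v‖) := by ring
    _ ≤ R - t * (1 - t) * (2 * R - ‖u + v‖) := by
      gcongr
      exact mul_le_of_le_one_right ht.1 (by linarith [ht.1])

theorem exists_asymptotic_norm_closedConvexHull {F : Filter E} [NeBot F] {B : Set E} (hBF : B ∈ F)
    (hB : Bornology.IsBounded B) : ∃ d, ∀ η > 0,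
      (∃ s ∈ F, ∀ z ∈ closedConvexHull ℝ s, d - η < ‖z‖) ∧
        ∀ s ∈ F, ∃ z ∈ closedConvexHull ℝ s, ‖z‖ < d + η := by
  let r : F.sets → ℝ := fun s => Metric.infDist 0 (closedConvexHull ℝ (s : Set E))
  have r_le_norm (s : F.sets) {z : E} (hz : z ∈ closedConvexHull ℝ (s : Set E)) : r s ≤ ‖z‖ := by
    simpa using Metric.infDist_le_dist_of_mem (x := (0 : E)) hz
  have hr_bdd : BddAbove (Set.range r) := by
    obtain ⟨M, hM⟩ := hB.exists_norm_le
    refine ⟨M, ?_⟩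
    rintro _ ⟨s, rfl⟩
    obtain ⟨z, hzs, hzB⟩ := nonempty_of_mem (inter_mem s.2 hBF)
    exact (r_le_norm s (subset_closedConvexHull hzs)).trans (hM z hzB)
  refine ⟨⨆ s, r s, fun η hη => ⟨?_, fun s hs => ?_⟩⟩
  · have : Nonempty F.sets := ⟨⟨B, hBF⟩⟩
    obtain ⟨s, hs⟩ := exists_lt_of_lt_ciSup (sub_lt_self (⨆ s, r s) hη)
    exact ⟨s, s.2, fun z hz => hs.trans_le (r_le_norm s hz)⟩
  · have hne := (nonempty_of_mem hs).mono (subset_closedConvexHull (𝕜 := ℝ))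
    obtain ⟨z, hz, hlt⟩ := (Metric.infDist_lt_iff hne).1
      ((le_ciSup hr_bdd ⟨s, hs⟩).trans_lt (lt_add_of_pos_right _ hη))
    exact ⟨z, hz, by simpa using hlt⟩

variable [UniformConvexSpace E]

theorem exists_forall_norm_add_le_two_mul_sub {ε : ℝ} (hε : 0 < ε) (R₀ : ℝ) :
    ∃ δ > 0, ∀ ⦃R : ℝ⦄, R ≤ R₀ → ∀ ⦃u : E⦄, ‖u‖ ≤ R → ∀ ⦃v : E⦄, ‖v‖ ≤ R →
      ε ≤ ‖u - v‖ → ‖u + v‖ ≤ 2 * R - δ := by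
  rcases le_or_gt R₀ 0 with hR₀ | hR₀
  · refine ⟨1, one_pos, fun R hR u hu v hv huv => ?_⟩
    linarith [norm_sub_le u v]
  obtain ⟨δ, hδ, h⟩ := exists_forall_closed_ball_dist_add_le_two_sub E (div_pos hε hR₀)
  refine ⟨ε / 2 * δ, by positivity, fun R hR u hu v hv huv => ?_⟩
  have hεR : ε / 2 ≤ R := by linarith [norm_sub_le u v]
  have hR_pos : 0 < R := by linarith
  have norm_scale (w : E) : ‖R⁻¹ • w‖ = ‖w‖ / R := by
    rw [norm_smul_of_nonneg (inv_nonneg.2 hR_pos.le), inv_mul_eq_div]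
  have hunit : ‖R⁻¹ • u + R⁻¹ • v‖ ≤ 2 - δ := by
    refine h ?_ ?_ ?_
    · rw [norm_scale]; exact div_le_one_of_le₀ hu hR_pos.le
    · rw [norm_scale]; exact div_le_one_of_le₀ hv hR_pos.le
    · rw [← smul_sub, norm_scale]; gcongr
  rw [← smul_add, norm_scale, div_le_iff₀ hR_pos] at hunit
  calc ‖u + v‖ ≤ 2 * R - R * δ := by linarith
    _ ≤ 2 * R - ε / 2 * δ := by gcongr

theorem tendsto_norm_sub_zero_of_tendsto_norm_sub_norm_convexCombo {ι : Type*} {l : Filter ι}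
    {u v : ι → E} {t : ι → ℝ} {b M : ℝ} (hb : 0 < b) (ht : ∀ i, t i ∈ Set.Icc (0 : ℝ) 1)
    (htb : ∀ᶠ i in l, b ≤ t i * (1 - t i)) (hM : ∀ i, ‖u i‖ ≤ M) (hvu : ∀ i, ‖v i‖ ≤ ‖u i‖)
    (hgap : Tendsto (fun i => ‖u i‖ - ‖(1 - t i) • u i + t i • v i‖) l (𝓝 0)) :
    Tendsto (fun i => ‖u i - v i‖) l (𝓝 0) := by
  refine tendsto_order.2 ⟨fun ε hε => .of_forall fun i => hε.trans_le (norm_nonneg _),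
    fun ε hε => ?_⟩
  obtain ⟨δ, hδ, huc⟩ := exists_forall_norm_add_le_two_mul_sub (E := E) hε M
  filter_upwards [htb, hgap.eventually_lt_const (mul_pos hb hδ)] with i hbi hgap_lt
  by_contra! hfar
  have hδ_le : δ ≤ 2 * ‖u i‖ - ‖u i + v i‖ := by linarith [huc (hM i) le_rfl (hvu i) hfar]
  have hgap_ge : b * δ ≤ t i * (1 - t i) * (2 * ‖u i‖ - ‖u i + v i‖) :=
    mul_le_mul hbi hδ_le hδ.le (hb.le.trans hbi)
  linarith [norm_convexCombo_le le_rfl (hvu i) (ht i)]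

theorem exists_forall_convex_dist_lt {ε : ℝ} (hε : 0 < ε) (d : ℝ) :
    ∃ η > 0, ∀ ⦃A : Set E⦄, Convex ℝ A → (∀ z ∈ A, d - η < ‖z‖) →
      ∀ x ∈ A, ∀ y ∈ A, ‖x‖ < d + η → ‖y‖ < d + η → dist x y < ε := by
  obtain ⟨δ, hδ, huc⟩ := exists_forall_norm_add_le_two_mul_sub (E := E) hε (d + 1)
  refine ⟨min 1 (δ / 4), by positivity, fun A hA hlow x hx y hy hxd hyd => ?_⟩
  have hη_one := min_le_left 1 (δ / 4)
  have hη_δ := min_le_right 1 (δ / 4)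
  rw [dist_eq_norm]
  by_contra! hfar
  have hsum := huc (by linarith) hxd.le hyd.le hfar
  have hmid := hlow _ (hA hx hy one_half_pos.le one_half_pos.le (add_halves 1))
  rw [← smul_add, norm_smul_of_nonneg one_half_pos.le] at hmid
  linarith

end UniformlyConvex

section WeakCompactness

theorem isComplete_inter_of_isClosed {X : Type*} [UniformSpace X] {s t : Set X}
    (hs : IsComplete s) (ht : IsClosed t) : IsComplete (s ∩ t) := fun F hF hle => by
  have := hF.1
  obtain ⟨hFs, hFt⟩ := inter_mem_iff.1 (le_principal_iff.1 hle)
  obtain ⟨x, hxs, hFx⟩ := hs F hF (le_principal_iff.2 hFs)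
  exact ⟨x, ⟨hxs, ht.mem_of_tendsto (tendsto_id'.2 hFx) hFt⟩, hFx⟩

variable {E : Type*} [NormedAddCommGroup E] [NormedSpace ℝ E] [UniformConvexSpace E]

theorem exists_forall_mem_closedConvexHull {C : Set E} (hC_complete : IsComplete C)
    (hC : Convex ℝ C) (hC_bdd : Bornology.IsBounded C) {F : Filter E} [NeBot F] (hCF : C ∈ F) :
    ∃ u, ∀ s ∈ F, u ∈ closedConvexHull ℝ s := by
  obtain ⟨d, hd⟩ := exists_asymptotic_norm_closedConvexHull hCF hC_bdd
  let G := F.lift' (closedConvexHull ℝ) ⊓ comap norm (𝓝 d)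
  have mem_G {s : Set E} (hs : s ∈ F) : closedConvexHull ℝ s ∈ G :=
    mem_inf_of_left (mem_lift' hs)
  have hG_neBot : NeBot G := by
    refine ((F.basis_sets.lift' (closedConvexHull ℝ).monotone).inf
      ((nhds_basis_Ioo_pos d).comap norm)).neBot_iff.2 ?_
    rintro ⟨s, η⟩ ⟨hs, hη⟩
    obtain ⟨⟨t, ht, hlow⟩, hup⟩ := hd η hη
    obtain ⟨z, hz, hzd⟩ := hup (s ∩ t) (inter_mem hs ht)
    exact ⟨z, (closedConvexHull ℝ).monotone Set.inter_subset_left hz,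
      hlow z ((closedConvexHull ℝ).monotone Set.inter_subset_right hz), hzd⟩
  have hG_cauchy : Cauchy G := by
    refine Metric.cauchy_iff.2 ⟨hG_neBot, fun ε hε => ?_⟩
    obtain ⟨η, hη, hclose⟩ := exists_forall_convex_dist_lt (E := E) hε d
    obtain ⟨⟨s, hs, hlow⟩, -⟩ := hd η hη
    have hball : {z : E | ‖z‖ < d + η} ∈ G :=
      mem_inf_of_right (preimage_mem_comap (Iio_mem_nhds (lt_add_of_pos_right d hη)))
    exact ⟨_, inter_mem (mem_G hs) hball, fun x hx y hy =>
      hclose convex_closedConvexHull hlow x hx.1 y hy.1 hx.2 hy.2⟩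
  have hCG : C ∈ G :=
    mem_of_superset (mem_G hCF) (closedConvexHull_min subset_rfl hC hC_complete.isClosed)
  obtain ⟨u, -, hGu⟩ := hC_complete G hG_cauchy (le_principal_iff.2 hCG)
  exact ⟨u, fun s hs => isClosed_closedConvexHull.mem_of_tendsto (tendsto_id'.2 hGu) (mem_G hs)⟩

theorem isCompact_toWeakSpace_image {C : Set E} (hC_complete : IsComplete C)
    (hC : Convex ℝ C) (hC_bdd : Bornology.IsBounded C) : IsCompact (toWeakSpace ℝ E '' C) := by
  refine isCompact_iff_ultrafilter_le_nhds'.2 fun U hU => ?_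
  let V : Ultrafilter E := U.map (toWeakSpace ℝ E).symm
  have hCV : C ∈ V := by
    rwa [LinearEquiv.image_eq_preimage_symm] at hU
  obtain ⟨u, hu⟩ := exists_forall_mem_closedConvexHull hC_complete hC hC_bdd hCV
  have huC : u ∈ C := closedConvexHull_min subset_rfl hC hC_complete.isClosed (hu C hCV)
  exact ⟨_, ⟨u, huC, rfl⟩, tendsto_toWeakSpace_of_forall_mem_closedConvexHull hu⟩

theorem isSeqCompact_toWeakSpace_image {C : Set E} (hC_complete : IsComplete C)
    (hC : Convex ℝ C) (hC_bdd : Bornology.IsBounded C) : IsSeqCompact (toWeakSpace ℝ E '' C) := by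
  intro z hz
  choose x hxC hxz using hz
  obtain rfl : (fun n => toWeakSpace ℝ E (x n)) = z := funext hxz
  let K := C ∩ closure (Submodule.span ℝ (Set.range x) : Set E)
  have hxK (n : ℕ) : x n ∈ K := ⟨hxC n, subset_closure (Submodule.subset_span ⟨n, rfl⟩)⟩
  have hK_compact : IsCompact (toWeakSpace ℝ E '' K) :=
    isCompact_toWeakSpace_image (isComplete_inter_of_isClosed hC_complete isClosed_closure)
      (hC.inter (Submodule.convex _).closure) (hC_bdd.subset Set.inter_subset_left)
  have hK_sep : TopologicalSpace.IsSeparable K :=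
    ((Set.countable_range x).isSeparable.span (R := ℝ)).closure.mono Set.inter_subset_right
  have := isCompact_iff_compactSpace.1 hK_compact
  have := metrizableSpace_of_isCompact_of_isSeparable hK_compact hK_sep
  obtain ⟨⟨_, u, hu, rfl⟩, φ, hφ, hlim⟩ :=
    CompactSpace.tendsto_subseq fun n => (⟨_, x n, hxK n, rfl⟩ : toWeakSpace ℝ E '' K)
  exact ⟨_, ⟨u, hu.1, rfl⟩, φ, hφ, tendsto_subtype_rng.1 hlim⟩

theorem exists_subseq_tendsto_toWeakSpace {C : Set E} (hC_complete : IsComplete C)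
    (hC : Convex ℝ C) {x : ℕ → E} (hxC : ∀ n, x n ∈ C)
    (hx_bdd : Bornology.IsBounded (Set.range x)) :
    ∃ u ∈ C, ∃ φ : ℕ → ℕ, StrictMono φ ∧
      Tendsto (fun n => toWeakSpace ℝ E (x (φ n))) atTop (𝓝 (toWeakSpace ℝ E u)) := by
  obtain ⟨r, hr⟩ := hx_bdd.subset_closedBall 0
  obtain ⟨_, ⟨u, hu, rfl⟩, φ, hφ, hlim⟩ :=
    isSeqCompact_toWeakSpace_image
      (isComplete_inter_of_isClosed hC_complete Metric.isClosed_closedBall)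
      (hC.inter (convex_closedBall 0 r))
      (Metric.isBounded_closedBall.subset Set.inter_subset_right)
      (fun n => ⟨x n, ⟨hxC n, hr ⟨n, rfl⟩⟩, rfl⟩)
  exact ⟨u, hu.1, φ, hφ, hlim⟩

end WeakCompactness

section Hybrid

variable {X : Type*} [PseudoMetricSpace X] {T : X → X} {C : Set X}

/-- `T` is a hybrid mapping on `C`, in the sense of Takahashi; stated with distances, so that it
makes sense without a linear structure. -/
def IsHybridOn (T : X → X) (C : Set X) : Prop :=
  ∀ x ∈ C, ∀ y ∈ C,
    3 * dist (T x) (T y) ^ 2 ≤ dist x y ^ 2 + dist (T x) y ^ 2 + dist (T y) x ^ 2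

/-- Condition `(E_μ)` of García-Falset, Llorens-Fuster and Suzuki for `T` on `C`: moving `y` to its
image costs at most a multiple of the displacement of `x`. The usual restriction `1 ≤ μ` is not
imposed. -/
def ConditionE (μ : ℝ) (T : X → X) (C : Set X) : Prop :=
  ∀ x ∈ C, ∀ y ∈ C, dist x (T y) ≤ dist x y + μ * dist x (T x)

theorem IsHybridOn.conditionE (hT : IsHybridOn T C) : ConditionE 3 T C := by
  intro x hx y hy
  by_contra! hfar
  have hTxTy : (dist x (T y) - dist x (T x)) ^ 2 ≤ dist (T x) (T y) ^ 2 := by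
    gcongr
    · linarith [dist_nonneg (x := x) (y := y), dist_nonneg (x := x) (y := T x)]
    · linarith [dist_triangle x (T x) (T y)]
  have hTxy : dist (T x) y ^ 2 ≤ (dist x (T x) + dist x y) ^ 2 := by
    gcongr
    exact dist_triangle_left (T x) y x
  have hprod : dist x y * (dist x y + 3 * dist x (T x)) <
      (dist x (T y) - 3 * dist x (T x)) * dist x (T y) :=
    mul_lt_mul'' (by linarith) hfar dist_nonneg (by positivity)
  have hybrid := hT x hx y hy
  rw [dist_comm (T y) x] at hybrid
  linarith [sq_nonneg (dist x (T x)),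
    mul_nonneg (dist_nonneg (x := x) (y := y)) (dist_nonneg (x := x) (y := T x))]

theorem ConditionE.dist_map_le {μ : ℝ} (hT : ConditionE μ T C) {z p : X} (hz : z ∈ C)
    (hp : p ∈ C) (hfix : Function.IsFixedPt T p) : dist (T z) p ≤ dist z p := by
  simpa [hfix.eq, dist_comm p] using hT p hp z hz

end Hybrid

section Opial

variable {E : Type*} [NormedAddCommGroup E] [NormedSpace ℝ E]

variable (E) in
/-- Opial's condition: a weakly convergent sequence is asymptotically strictly closer to its weak
limit than to any other point. -/
def OpialCondition : Prop :=
  ∀ (z : ℕ → E) (u : E),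
    Tendsto (fun n => toWeakSpace ℝ E (z n)) atTop (𝓝 (toWeakSpace ℝ E u)) →
      ∀ v ≠ u, liminf (fun n => dist (z n) u) atTop < liminf (fun n => dist (z n) v) atTop

theorem OpialCondition.isFixedPt_of_tendsto (hE : OpialCondition E) {T : E → E} {C : Set E} {μ : ℝ}
    (hT : ConditionE μ T C) {z : ℕ → E} (hz : ∀ n, z n ∈ C)
    (hz_bdd : Bornology.IsBounded (Set.range z)) {u : E} (hu : u ∈ C)
    (hzu : Tendsto (fun n => toWeakSpace ℝ E (z n)) atTop (𝓝 (toWeakSpace ℝ E u)))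
    (hzT : Tendsto (fun n => dist (z n) (T (z n))) atTop (𝓝 0)) : Function.IsFixedPt T u := by
  by_contra hne
  obtain ⟨c, hc, hcT⟩ := exists_between (hE z u hzu (T u) hne)
  obtain ⟨c', hcc', hcT'⟩ := exists_between hcT
  have dist_bdd_above : IsBoundedUnder (· ≤ ·) atTop fun n => dist (z n) u := by
    obtain ⟨M, hM⟩ := hz_bdd.subset_closedBall u
    exact isBoundedUnder_of ⟨M, fun n => hM ⟨n, rfl⟩⟩
  have dist_bdd_below : IsBoundedUnder (· ≥ ·) atTop fun n => dist (z n) (T u) :=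
    isBoundedUnder_of ⟨0, fun n => dist_nonneg⟩
  have near_u : ∃ᶠ n in atTop, dist (z n) u < c :=
    frequently_lt_of_liminf_lt dist_bdd_above.isCoboundedUnder_ge hc
  have far_Tu : ∀ᶠ n in atTop, c' < dist (z n) (T u) :=
    eventually_lt_of_lt_liminf hcT' dist_bdd_below
  have small : ∀ᶠ n in atTop, μ * dist (z n) (T (z n)) < c' - c :=
    (hzT.const_mul μ).eventually_lt_const (by simpa using hcc')
  obtain ⟨n, hnear, hfar, hsmall⟩ := (near_u.and_eventually (far_Tu.and small)).exists
  linarith [hT (z n) (hz n) u hu]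

theorem OpialCondition.eq_of_tendsto (hE : OpialCondition E) {x : ℕ → E} {u v : E} {c d : ℝ}
    (hc : Tendsto (fun n => dist (x n) u) atTop (𝓝 c))
    (hd : Tendsto (fun n => dist (x n) v) atTop (𝓝 d)) {φ ψ : ℕ → ℕ}
    (hφ : Tendsto φ atTop atTop) (hψ : Tendsto ψ atTop atTop)
    (hu : Tendsto (fun n => toWeakSpace ℝ E (x (φ n))) atTop (𝓝 (toWeakSpace ℝ E u)))
    (hv : Tendsto (fun n => toWeakSpace ℝ E (x (ψ n))) atTop (𝓝 (toWeakSpace ℝ E v))) :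
    u = v := by
  by_contra hne
  have hcd : c < d := (hc.comp hφ).liminf_eq ▸ (hd.comp hφ).liminf_eq ▸ hE _ u hu v (Ne.symm hne)
  have hdc : d < c := (hd.comp hψ).liminf_eq ▸ (hc.comp hψ).liminf_eq ▸ hE _ v hv u hne
  exact hcd.not_gt hdc

theorem OpialCondition.exists_tendsto (hE : OpialCondition E) {F : Set E} {x : ℕ → E}
    (hdist : ∀ p ∈ F, ∃ d, Tendsto (fun n => dist (x n) p) atTop (𝓝 d))
    (hsub : ∀ ns : ℕ → ℕ, Tendsto ns atTop atTop → ∃ p ∈ F, ∃ ms : ℕ → ℕ,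
      Tendsto ms atTop atTop ∧
        Tendsto (fun n => toWeakSpace ℝ E (x (ns (ms n)))) atTop (𝓝 (toWeakSpace ℝ E p))) :
    ∃ p ∈ F, Tendsto (fun n => toWeakSpace ℝ E (x n)) atTop (𝓝 (toWeakSpace ℝ E p)) := by
  obtain ⟨p, hp, φ, hφ, hφp⟩ := hsub id tendsto_id
  refine ⟨p, hp, tendsto_of_subseq_tendsto fun ns hns => ?_⟩
  obtain ⟨q, hq, ms, hms, hmsq⟩ := hsub ns hns
  obtain ⟨c, hc⟩ := hdist p hp
  obtain ⟨d, hd⟩ := hdist q hq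
  obtain rfl : p = q := hE.eq_of_tendsto hc hd hφ (hns.comp hms) hφp hmsq
  exact ⟨ms, hmsq⟩

end Opial

section Ishikawa

/-- `x` is an Ishikawa sequence of `T` with step sizes `lam` and `gam`, and `y` its sequence of
intermediate points. Indexing starts at `0`, and the starting point is `x 0`. -/
structure IsIshikawaSeq {E : Type*} [AddCommGroup E] [Module ℝ E] (T : E → E) (lam gam : ℕ → ℝ)
    (x y : ℕ → E) : Prop where
  y_eq : ∀ n, y n = (1 - lam n) • x n + lam n • T (x n)
  x_succ : ∀ n, x (n + 1) = (1 - gam n) • x n + gam n • T (y n)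

namespace IsIshikawaSeq

theorem mem {E : Type*} [AddCommGroup E] [Module ℝ E] {T : E → E} {lam gam : ℕ → ℝ} {x y : ℕ → E}
    {C : Set E} (h : IsIshikawaSeq T lam gam x y) (hC : Convex ℝ C)
    (hTC : Set.MapsTo T C C) (hlam : ∀ n, lam n ∈ Set.Icc (0 : ℝ) 1)
    (hgam : ∀ n, gam n ∈ Set.Icc (0 : ℝ) 1) (hx₀ : x 0 ∈ C) (n : ℕ) : x n ∈ C ∧ y n ∈ C := by
  have y_mem {n : ℕ} (hxn : x n ∈ C) : y n ∈ C :=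
    h.y_eq n ▸ hC hxn (hTC hxn) (sub_nonneg.2 (hlam n).2) (hlam n).1 (sub_add_cancel 1 _)
  have x_mem (n : ℕ) : x n ∈ C := by
    induction n with
    | zero => exact hx₀
    | succ n ih =>
      exact h.x_succ n ▸ hC ih (hTC (y_mem ih)) (sub_nonneg.2 (hgam n).2) (hgam n).1
        (sub_add_cancel 1 _)
  exact ⟨x_mem n, y_mem (x_mem n)⟩

variable {E : Type*} [SeminormedAddCommGroup E] [NormedSpace ℝ E] {T : E → E} {lam gam : ℕ → ℝ}
  {x y : ℕ → E} {p : E} {a : ℝ}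

theorem dist_y_le (h : IsIshikawaSeq T lam gam x y) {n : ℕ} (hlam : lam n ∈ Set.Icc (0 : ℝ) 1)
    (hTx : dist (T (x n)) p ≤ dist (x n) p) : dist (y n) p ≤ dist (x n) p :=
  calc dist (y n) p ≤ (1 - lam n) * dist (x n) p + lam n * dist (T (x n)) p :=
        h.y_eq n ▸ (convexOn_univ_dist p).2 trivial trivial (sub_nonneg.2 hlam.2) hlam.1
          (sub_add_cancel 1 _)
    _ ≤ (1 - lam n) * dist (x n) p + lam n * dist (x n) p := by gcongr; exact hlam.1
    _ = dist (x n) p := by ring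

theorem mul_dist_sub_dist_le (h : IsIshikawaSeq T lam gam x y) {n : ℕ} (ha : 0 ≤ a)
    (hgam : gam n ∈ Set.Icc a 1) (hyx : dist (y n) p ≤ dist (x n) p)
    (hTy : dist (T (y n)) p ≤ dist (y n) p) :
    a * (dist (x n) p - dist (y n) p) ≤ dist (x n) p - dist (x (n + 1)) p := by
  have hgam_nonneg : 0 ≤ gam n := ha.trans hgam.1
  have hsucc : dist (x (n + 1)) p ≤ (1 - gam n) * dist (x n) p + gam n * dist (y n) p :=
    calc dist (x (n + 1)) p ≤ (1 - gam n) * dist (x n) p + gam n * dist (T (y n)) p :=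
          h.x_succ n ▸ (convexOn_univ_dist p).2 trivial trivial (sub_nonneg.2 hgam.2) hgam_nonneg
            (sub_add_cancel 1 _)
      _ ≤ (1 - gam n) * dist (x n) p + gam n * dist (y n) p := by gcongr
  calc a * (dist (x n) p - dist (y n) p) ≤ gam n * (dist (x n) p - dist (y n) p) :=
        mul_le_mul_of_nonneg_right hgam.1 (sub_nonneg.2 hyx)
    _ ≤ dist (x n) p - dist (x (n + 1)) p := by linarith

theorem antitone_dist (h : IsIshikawaSeq T lam gam x y)
    (hlam : ∀ n, lam n ∈ Set.Icc (0 : ℝ) 1) (hTx : ∀ n, dist (T (x n)) p ≤ dist (x n) p)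
    (hTy : ∀ n, dist (T (y n)) p ≤ dist (y n) p) (hgam : ∀ n, gam n ∈ Set.Icc (0 : ℝ) 1) :
    Antitone fun n => dist (x n) p :=
  antitone_nat_of_succ_le fun n => by
    simpa using h.mul_dist_sub_dist_le le_rfl (hgam n) (h.dist_y_le (hlam n) (hTx n)) (hTy n)

theorem exists_tendsto_dist (h : IsIshikawaSeq T lam gam x y)
    (hlam : ∀ n, lam n ∈ Set.Icc (0 : ℝ) 1) (hTx : ∀ n, dist (T (x n)) p ≤ dist (x n) p)
    (hTy : ∀ n, dist (T (y n)) p ≤ dist (y n) p) (hgam : ∀ n, gam n ∈ Set.Icc (0 : ℝ) 1) :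
    ∃ d, Tendsto (fun n => dist (x n) p) atTop (𝓝 d) :=
  ⟨_, tendsto_atTop_ciInf (h.antitone_dist hlam hTx hTy hgam)
    ⟨0, Set.forall_mem_range.2 fun _ => dist_nonneg⟩⟩

theorem tendsto_dist_sub_dist (h : IsIshikawaSeq T lam gam x y)
    (hlam : ∀ n, lam n ∈ Set.Icc (0 : ℝ) 1) (hTx : ∀ n, dist (T (x n)) p ≤ dist (x n) p)
    (hTy : ∀ n, dist (T (y n)) p ≤ dist (y n) p) (ha : 0 < a) (hgam : ∀ n, gam n ∈ Set.Icc a 1) :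
    Tendsto (fun n => dist (x n) p - dist (y n) p) atTop (𝓝 0) := by
  obtain ⟨d, hd⟩ := h.exists_tendsto_dist hlam hTx hTy
    fun n => Set.Icc_subset_Icc_left ha.le (hgam n)
  have hdecr : Tendsto (fun n => (dist (x n) p - dist (x (n + 1)) p) / a) atTop (𝓝 0) := by
    simpa using (hd.sub ((tendsto_add_atTop_iff_nat 1).2 hd)).div_const a
  have hyx (n : ℕ) : dist (y n) p ≤ dist (x n) p := h.dist_y_le (hlam n) (hTx n)
  exact squeeze_zero (fun n => sub_nonneg.2 (hyx n))
    (fun n => (le_div_iff₀' ha).2 (h.mul_dist_sub_dist_le ha.le (hgam n) (hyx n) (hTy n))) hdecr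

theorem tendsto_dist_map [UniformConvexSpace E] (h : IsIshikawaSeq T lam gam x y)
    (hlam : ∀ n, lam n ∈ Set.Icc (0 : ℝ) 1) (hTx : ∀ n, dist (T (x n)) p ≤ dist (x n) p)
    (hTy : ∀ n, dist (T (y n)) p ≤ dist (y n) p) (ha : 0 < a) (hgam : ∀ n, gam n ∈ Set.Icc a 1)
    (hlam_liminf : 0 < liminf (fun n => lam n * (1 - lam n)) atTop) :
    Tendsto (fun n => dist (x n) (T (x n))) atTop (𝓝 0) := by
  obtain ⟨b, hb, hb_liminf⟩ := exists_between hlam_liminf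
  have hb_le : ∀ᶠ n in atTop, b ≤ lam n * (1 - lam n) :=
    (eventually_lt_of_lt_liminf hb_liminf (isBoundedUnder_of
      ⟨0, fun n => mul_nonneg (hlam n).1 (sub_nonneg.2 (hlam n).2)⟩)).mono fun _ => le_of_lt
  have hanti := h.antitone_dist hlam hTx hTy fun n => Set.Icc_subset_Icc_left ha.le (hgam n)
  have hy_sub (n : ℕ) : y n - p = (1 - lam n) • (x n - p) + lam n • (T (x n) - p) := by
    rw [h.y_eq]
    module
  have hgap := h.tendsto_dist_sub_dist hlam hTx hTy ha hgam
  simp only [dist_eq_norm, hy_sub] at hgap hTx hanti ⊢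
  simpa only [sub_sub_sub_cancel_right] using
    tendsto_norm_sub_zero_of_tendsto_norm_sub_norm_convexCombo hb hlam hb_le
      (fun n => hanti n.zero_le) hTx hgap

end IsIshikawaSeq

end Ishikawa

theorem ishikawa_hybrid_weak_convergence_general {E : Type*} [NormedAddCommGroup E]
    [NormedSpace ℝ E] [UniformConvexSpace E] (hE : OpialCondition E) {C : Set E}
    (hC_complete : IsComplete C) (hC : Convex ℝ C) {T : E → E} (hTC : Set.MapsTo T C C) {μ : ℝ}
    (hT : ConditionE μ T C) (hfix : ∃ p ∈ C, Function.IsFixedPt T p) {a : ℝ} (ha : 0 < a)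
    {lam gam : ℕ → ℝ} (hlam : ∀ n, lam n ∈ Set.Icc (0 : ℝ) 1) (hgam : ∀ n, gam n ∈ Set.Icc a 1)
    (hlam_liminf : 0 < liminf (fun n => lam n * (1 - lam n)) atTop) {x y : ℕ → E}
    (hxy : IsIshikawaSeq T lam gam x y) (hx₀ : x 0 ∈ C) :
    ∃ p ∈ C, Function.IsFixedPt T p ∧
      Tendsto (fun n => toWeakSpace ℝ E (x n)) atTop (𝓝 (toWeakSpace ℝ E p)) := by
  have hgam' (n : ℕ) : gam n ∈ Set.Icc (0 : ℝ) 1 := Set.Icc_subset_Icc_left ha.le (hgam n)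
  have hmem := hxy.mem hC hTC hlam hgam' hx₀
  have hTx {p : E} (hpC : p ∈ C) (hp : Function.IsFixedPt T p) (n : ℕ) :=
    hT.dist_map_le (hmem n).1 hpC hp
  have hTy {p : E} (hpC : p ∈ C) (hp : Function.IsFixedPt T p) (n : ℕ) :=
    hT.dist_map_le (hmem n).2 hpC hp
  obtain ⟨q, hqC, hq⟩ := hfix
  have hxT := hxy.tendsto_dist_map hlam (hTx hqC hq) (hTy hqC hq) ha hgam hlam_liminf
  have hx_bdd : Bornology.IsBounded (Set.range x) :=
    Metric.isBounded_closedBall.subset (Set.range_subset_iff.2 fun n =>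
      hxy.antitone_dist hlam (hTx hqC hq) (hTy hqC hq) hgam' n.zero_le)
  obtain ⟨p, ⟨hpC, hp⟩, hlim⟩ := hE.exists_tendsto (F := {p ∈ C | Function.IsFixedPt T p}) (x := x)
    (fun p hp => hxy.exists_tendsto_dist hlam (hTx hp.1 hp.2) (hTy hp.1 hp.2) hgam')
    fun ns hns => by
      obtain ⟨u, huC, ms, hms, hlim⟩ := exists_subseq_tendsto_toWeakSpace hC_complete hC
        (fun n => (hmem (ns n)).1) (hx_bdd.subset (Set.range_comp_subset_range ns x))
      refine ⟨u, ⟨huC, ?_⟩, ms, hms.tendsto_atTop, hlim⟩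
      exact hE.isFixedPt_of_tendsto hT (fun n => (hmem (ns (ms n))).1)
        (hx_bdd.subset (Set.range_comp_subset_range (ns ∘ ms) x)) huC hlim
        (hxT.comp (hns.comp hms.tendsto_atTop))
  exact ⟨p, hpC, hp, hlim⟩

/-- Let `E` be a uniformly convex real Banach space satisfying Opial's
condition, `C` a nonempty closed convex subset of `E`, and `T` a hybrid self-mapping of `C`
(i.e. `3‖Tx−Ty‖² ≤ ‖x−y‖² + ‖Tx−y‖² + ‖Ty−x‖²`) with a fixed point. Then the Ishikawa
iteration (with `λₙ ∈ [0,1]`, `γₙ ∈ [a,1]`, `0 < a ≤ 1`, `liminf λₙ(1−λₙ) > 0`) converges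
weakly to a fixed point of `T`. -/
theorem ishikawa_hybrid_weak_convergence
    {E : Type*} [NormedAddCommGroup E] [NormedSpace ℝ E] [CompleteSpace E]
    [UniformConvexSpace E]
    (hOpial : ∀ (z : ℕ → E) (u : E),
      (∀ f : E →L[ℝ] ℝ, Tendsto (fun n => f (z n)) atTop (𝓝 (f u))) →
      ∀ v : E, v ≠ u →
        Filter.liminf (fun n => ‖z n - u‖) atTop < Filter.liminf (fun n => ‖z n - v‖) atTop)
    (C : Set E) (hCne : C.Nonempty) (hCcl : IsClosed C) (hCcv : Convex ℝ C)
    (T : E → E) (hTself : Set.MapsTo T C C)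
    (hhybrid : ∀ x ∈ C, ∀ y ∈ C,
      3 * ‖T x - T y‖ ^ 2 ≤ ‖x - y‖ ^ 2 + ‖T x - y‖ ^ 2 + ‖T y - x‖ ^ 2)
    (hF : ∃ p ∈ C, T p = p)
    (a : ℝ) (ha0 : 0 < a) (ha1 : a ≤ 1)
    (lam gam : ℕ → ℝ)
    (hlam : ∀ n, lam n ∈ Set.Icc (0 : ℝ) 1) (hgam : ∀ n, gam n ∈ Set.Icc a 1)
    (hliminf : 0 < Filter.liminf (fun n => lam n * (1 - lam n)) atTop)
    (x y : ℕ → E) (x₀ : E) (hx₀ : x₀ ∈ C) (hinit : x 0 = x₀)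
    (hy : ∀ n, y n = (1 - lam n) • x n + lam n • T (x n))
    (hxs : ∀ n, x (n + 1) = (1 - gam n) • x n + gam n • T (y n)) :
    ∃ p ∈ C, T p = p ∧
      ∀ f : E →L[ℝ] ℝ, Tendsto (fun n => f (x n)) atTop (𝓝 (f p)) := by
  obtain ⟨p, hpC, hp, hlim⟩ := ishikawa_hybrid_weak_convergence_general
    (fun z u hzu v hv => by
      simpa only [dist_eq_norm] using hOpial z u (tendsto_toWeakSpace_iff.1 hzu) v hv)
    hCcl.isComplete hCcv hTself
    (IsHybridOn.conditionE fun x hx y hy => by simpa only [dist_eq_norm] using hhybrid x hx y hy)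
    hF ha0 hlam hgam hliminf ⟨hy, hxs⟩ (hinit ▸ hx₀)
  exact ⟨p, hpC, hp, tendsto_toWeakSpace_iff.1 hlim⟩
end
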